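/- arXiv:2510.04099 — 3 statements merged into one kernel-verified Lean document; each statement's English description precedes it below -/
import Mathlib

section
/- Let m ≥ 3 be an integer with an odd factor and let (e_1,…,e_m) be an optimal edge family of size m. Then there exist a constant c > 0, an angle φ ∈ ℝ, a permutation σ of {1,…,m}, and signs ε = (ε_1,…,ε_m) ∈ {±1}^m with ∑_{j=1}^m ε_j·e^{ijπ/m} = 0, such that e_{σ(j)} = c·ε_j·(cos(φ + jπ/m), sin(φ + jπ/m)) for every j = 1,…,m. In particular every optimal edge family is equilateral: all ‖e_j‖₂ are equal. -/
noncomputable section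

open Real
open scoped RealInnerProductSpace ENNReal

/-- ℝ² as a Euclidean space. -/
abbrev E2 : Type := EuclideanSpace ℝ (Fin 2)

/-- The vector `(x, y)` in ℝ². -/
def vec2 (x y : ℝ) : E2 := (WithLp.equiv 2 (Fin 2 → ℝ)).symm ![x, y]

/-- The coordinates of a vector in ℝ². -/
def toFun2 (v : E2) : Fin 2 → ℝ := WithLp.equiv 2 (Fin 2 → ℝ) v

/-- The phaseless measurement map `Φ_A(x) = (|⟨a_j, x⟩|)_j`. -/
def PhiMap {m : ℕ} (a : Fin m → E2) (x : E2) : EuclideanSpace ℝ (Fin m) :=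
  (WithLp.equiv 2 (Fin m → ℝ)).symm fun j => |⟪a j, x⟫|

/-- The distance `dist(x,y) = min ‖x − y‖ ‖x + y‖` (real phase retrieval distance). -/
def pdist (x y : E2) : ℝ := min ‖x - y‖ ‖x + y‖

/-- The set of Lipschitz ratios of the phaseless measurement map. -/
def ratioSet {m : ℕ} (a : Fin m → E2) : Set ℝ :=
  {r | ∃ x y : E2, pdist x y ≠ 0 ∧ r = ‖PhiMap a x - PhiMap a y‖ / pdist x y}

/-- The optimal lower Lipschitz constant `L_A`. -/
def lipL {m : ℕ} (a : Fin m → E2) : ℝ := sInf (ratioSet a)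

/-- The optimal upper Lipschitz constant `U_A`. -/
def lipU {m : ℕ} (a : Fin m → E2) : ℝ := sSup (ratioSet a)

/-- The condition number `β_A = U_A / L_A`, with `β_A = +∞` when `L_A = 0`. -/
def condNum {m : ℕ} (a : Fin m → E2) : ℝ≥0∞ :=
  if lipL a = 0 then ⊤ else ENNReal.ofReal (lipU a / lipL a)

/-- An edge family: nonzero vectors with pairwise distinct directions summing to zero
(the edge vectors of a strictly convex polygon). -/
def IsEdgeFamily {m : ℕ} (e : Fin m → E2) : Prop :=
  (∀ j, e j ≠ 0) ∧
  (∀ i j : Fin m, i ≠ j → ‖e i‖⁻¹ • e i ≠ ‖e j‖⁻¹ • e j) ∧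
  ∑ j, e j = 0

/-- The diameter-to-perimeter ratio of the polygon with edge vectors `e`. -/
def rRatio {m : ℕ} (e : Fin m → E2) : ℝ :=
  sSup {s | ∃ u : E2, ‖u‖ = 1 ∧ s = ∑ j, |⟪e j, u⟫|} / (2 * ∑ j, ‖e j‖)

/-- An optimal edge family: minimizes `rRatio` among all edge families of size `m`. -/
def IsOptimalEdgeFamily {m : ℕ} (e : Fin m → E2) : Prop :=
  IsEdgeFamily e ∧ ∀ e' : Fin m → E2, IsEdgeFamily e' → rRatio e ≤ rRatio e'

/-- The complex square map on ℝ² ≅ ℂ: `f(t·(cos φ, sin φ)) = t²·(cos 2φ, sin 2φ)`. -/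
def csq (v : E2) : E2 :=
  vec2 (toFun2 v 0 ^ 2 - toFun2 v 1 ^ 2) (2 * toFun2 v 0 * toFun2 v 1)

/-- The harmonic frame `E_m`: the `j`-th row is `(cos((j−1)π/m), sin((j−1)π/m))`, `j = 1,…,m`. -/
def harmonicFrame (m : ℕ) : Fin m → E2 :=
  fun j => vec2 (Real.cos ((j : ℕ) * π / m)) (Real.sin ((j : ℕ) * π / m))


lemma inner_vec2 (a b c d : ℝ) : ⟪vec2 a b, vec2 c d⟫ = a * c + b * d := by
  simp [vec2, PiLp.inner_apply, Fin.sum_univ_two]; ring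

def dir (a : ℝ) : E2 := vec2 (Real.cos a) (Real.sin a)

lemma inner_dir (a b : ℝ) : ⟪dir a, dir b⟫ = Real.cos (a - b) := by
  rw [dir, dir, inner_vec2, Real.cos_sub]

lemma norm_dir (a : ℝ) : ‖dir a‖ = 1 := by
  have h := real_inner_self_eq_norm_sq (dir a)
  rw [inner_dir, sub_self, Real.cos_zero] at h
  nlinarith [norm_nonneg (dir a)]

lemma dir_add_pi (a : ℝ) : dir (a + π) = - dir a := by
  ext i; fin_cases i <;> simp [dir, vec2]

lemma norm_dir_sub (a b : ℝ) (h0 : a ≤ b) (h1 : b ≤ a + π) :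
    ‖dir a - dir b‖ = 2 * Real.sin ((b - a) / 2) := by
  have h : ‖dir a - dir b‖ ^ 2 = (2 * Real.sin ((b - a) / 2)) ^ 2 := by
    rw [@norm_sub_sq ℝ, norm_dir, norm_dir]
    simp only [RCLike.re_to_real]
    rw [inner_dir, show a - b = -(2 * ((b - a) / 2)) by ring, Real.cos_neg, Real.cos_two_mul]
    nlinarith [Real.sin_sq_add_cos_sq ((b - a) / 2)]
  have hs : 0 ≤ Real.sin ((b - a) / 2) :=
    Real.sin_nonneg_of_nonneg_of_le_pi (by linarith) (by linarith [Real.pi_pos])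
  exact (pow_left_inj₀ (norm_nonneg _) (by positivity) (by norm_num)).1 h

lemma exists_dir (v : E2) : ∃ a, v = ‖v‖ • dir a := by
  refine ⟨Complex.arg ⟨v 0, v 1⟩, ?_⟩
  have hn : ‖v‖ = ‖(⟨v 0, v 1⟩ : ℂ)‖ := by
    rw [EuclideanSpace.norm_eq, Complex.norm_eq_sqrt_sq_add_sq]
    simp [Fin.sum_univ_two]
  have h1 := Complex.norm_mul_cos_arg ⟨v 0, v 1⟩
  have h2 := Complex.norm_mul_sin_arg ⟨v 0, v 1⟩
  ext i; fin_cases i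
  · simp [dir, vec2, hn, h1]
  · simp [dir, vec2, hn, h2]

lemma exists_half (v : E2) : ∃ a t : ℝ, 0 ≤ a ∧ a < π ∧ (t = 1 ∨ t = -1) ∧ v = (‖v‖ * t) • dir a := by
  obtain ⟨b, hb⟩ := exists_dir v
  have key : ∀ n : ℕ, ∀ x : ℝ, dir (x + n * π) = ((-1 : ℝ) ^ n) • dir x := by
    intro n x
    induction n with
    | zero => simp
    | succ n ih =>
      rw [show x + ((n + 1 : ℕ) : ℝ) * π = (x + n * π) + π by push_cast; ring, dir_add_pi, ih, pow_succ]
      simp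
  have key2 : ∀ z : ℤ, ∀ x : ℝ, ∃ t : ℝ, (t = 1 ∨ t = -1) ∧ dir (x + z * π) = t • dir x := by
    intro z x
    obtain ⟨n, rfl | rfl⟩ := z.eq_nat_or_neg
    · exact ⟨_, neg_one_pow_eq_or ℝ n, by simpa using key n x⟩
    · refine ⟨(-1) ^ n, neg_one_pow_eq_or ℝ n, ?_⟩
      have := key n (x + (-(n : ℤ) : ℤ) * π)
      rw [show x + ((-(n : ℤ) : ℤ) : ℝ) * π + n * π = x by push_cast; ring] at this
      rw [this, smul_smul, ← mul_pow]; simp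
  obtain ⟨t, ht, h⟩ := key2 (toIcoDiv Real.pi_pos 0 b) (toIcoMod Real.pi_pos 0 b)
  have e := toIcoMod_add_toIcoDiv_zsmul Real.pi_pos 0 b
  rw [zsmul_eq_mul] at e
  rw [e] at h
  have hm := toIcoMod_mem_Ico Real.pi_pos 0 b
  refine ⟨toIcoMod Real.pi_pos 0 b, t, hm.1, by simpa using hm.2, ht, ?_⟩
  rw [← smul_smul, ← h]; exact hb

/-- upper bound on the sum of projections for the harmonic directions -/
lemma sum_abs_cos_le {m : ℕ} (hm : 3 ≤ m) (θ : ℝ) :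
    ∑ j ∈ Finset.range m, |Real.cos (θ - j * π / m)| ≤ 1 / Real.sin (π / (2 * m)) := by
  have hm0 : (0 : ℝ) < m := by positivity
  have hp := Real.pi_pos
  have hx : π / (2 * m) < π := by
    rw [div_lt_iff₀ (by positivity)]
    have : (3 : ℝ) ≤ m := by exact_mod_cast hm
    nlinarith
  have hs : 0 < Real.sin (π / (2 * m)) := Real.sin_pos_of_pos_of_lt_pi (by positivity) hx
  set F : ℝ → ℝ := fun θ => ∑ j ∈ Finset.range m, |Real.cos (θ - j * π / m)| with hF
  have hper : Function.Periodic F (π / m) := by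
    intro x
    obtain ⟨n, rfl⟩ : ∃ n, m = n + 1 := ⟨m - 1, by omega⟩
    simp only [hF]
    rw [Finset.sum_range_succ', Finset.sum_range_succ]
    congr 1
    · refine Finset.sum_congr rfl fun j _ => ?_
      congr 2; push_cast; field_simp; ring
    · rw [← abs_neg, ← Real.cos_sub_pi]
      congr 2; push_cast; field_simp; ring
  obtain ⟨y, hy, hxy⟩ := hper.exists_mem_Ico (by positivity : (0 : ℝ) < π / m) θ (π / 2 - π / m)
  change F θ ≤ _
  rw [hxy, le_div_iff₀ hs]
  have hFy : F y = ∑ j ∈ Finset.range m, Real.cos (y - j * π / m) := by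
    refine Finset.sum_congr rfl fun j hj => abs_of_nonneg ?_
    have hj' : (j : ℝ) + 1 ≤ m := by exact_mod_cast Finset.mem_range.1 hj
    have h1 : (j : ℝ) * π / m + π / m ≤ π := by
      rw [← add_div, div_le_iff₀ hm0]; nlinarith
    have h2 : 0 ≤ (j : ℝ) * π / m := by positivity
    apply Real.cos_nonneg_of_neg_pi_div_two_le_of_le <;> linarith [hy.1, hy.2]
  have tel : ∀ n : ℕ, (∑ j ∈ Finset.range n, Real.cos (y - j * π / m)) * Real.sin (π / (2 * m)) =
      (Real.sin (y + π / (2 * m)) - Real.sin (y + π / (2 * m) - n * π / m)) / 2 := by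
    intro n
    induction n with
    | zero => simp
    | succ n ih =>
      rw [Finset.sum_range_succ, add_mul, ih]
      have e1 : y + π / (2 * m) - n * π / m = (y - n * π / m) + π / (2 * m) := by ring
      have e2 : y + π / (2 * m) - (n + 1 : ℕ) * π / m = (y - n * π / m) - π / (2 * m) := by
        push_cast; field_simp; ring
      rw [e1, e2, Real.sin_add (y - n * π / m), Real.sin_sub (y - n * π / m)]; ring
  rw [hFy, tel m, mul_div_cancel_left₀ _ hm0.ne', Real.sin_sub_pi]
  linarith [Real.sin_le_one (y + π / (2 * m))]

lemma signs_exist {m : ℕ} (hm : 3 ≤ m) (hodd : ∃ k, Odd k ∧ 1 < k ∧ k ∣ m) :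
    ∃ ε : ℕ → ℝ, (∀ j, ε j = 1 ∨ ε j = -1) ∧
      ∑ j ∈ Finset.range m, (ε j : ℂ) * Complex.exp ((j * π / m : ℝ) * Complex.I) = 0 := by
  obtain ⟨k, hk, hk1, n, rfl⟩ := hodd
  have hn : 0 < n := by rcases Nat.eq_zero_or_pos n with h | h; · simp [h] at hm
                        · exact h
  refine ⟨fun j => (-1) ^ (j / n), fun j => neg_one_pow_eq_or ℝ _, ?_⟩
  have hp := Real.pi_pos
  have hk0 : (0 : ℝ) < k := by positivity
  have hn0 : (0 : ℝ) < n := by positivity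
  set z : ℕ → ℂ := fun j => (((-1) ^ (j / n) : ℝ) : ℂ) *
    Complex.exp ((j * π / (k * n : ℕ) : ℝ) * Complex.I) with hz
  set ζ : ℂ := -Complex.exp ((π / k : ℝ) * Complex.I) with hζ
  have hstep : ∀ j, z (n + j) = ζ * z j := by
    intro j
    simp only [hz, hζ]
    rw [Nat.add_div_left _ hn, pow_succ,
      show (((n + j : ℕ) : ℝ) * π / (k * n : ℕ) : ℝ) = π / k + j * π / (k * n : ℕ) by
        push_cast; field_simp]
    rw [Complex.ofReal_add, add_mul, Complex.exp_add]
    push_cast; ring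
  have hsteps : ∀ t j, z (n * t + j) = ζ ^ t * z j := by
    intro t
    induction t with
    | zero => simp
    | succ t ih => intro j; rw [Nat.mul_succ, add_assoc, ih, hstep]; ring
  have hsum : ∀ K, ∑ j ∈ Finset.range (n * K), z j =
      (∑ t ∈ Finset.range K, ζ ^ t) * ∑ j ∈ Finset.range n, z j := by
    intro K
    induction K with
    | zero => simp
    | succ K ih =>
      rw [Nat.mul_succ, Finset.sum_range_add, ih, Finset.sum_range_succ, add_mul]
      simp only [hsteps, ← Finset.mul_sum]
  have h1 : ζ ^ k = 1 := by
    rw [hζ, hk.neg_pow, ← Complex.exp_nat_mul,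
      show (k : ℂ) * (((π / k : ℝ) : ℂ) * Complex.I) = π * Complex.I by
        have : (k : ℂ) ≠ 0 := by exact_mod_cast hk0.ne'
        push_cast; field_simp]
    simp
  have h2 : ζ ≠ 1 := by
    intro h
    have h3 := congrArg Complex.im h
    rw [hζ, Complex.neg_im, Complex.exp_ofReal_mul_I_im] at h3
    have : 0 < Real.sin (π / k) := by
      apply Real.sin_pos_of_pos_of_lt_pi (by positivity)
      rw [div_lt_iff₀ hk0]
      have : (1 : ℝ) < k := by exact_mod_cast hk1
      nlinarith
    simp at h3
    linarith
  have h3 : ∑ t ∈ Finset.range k, ζ ^ t = 0 := by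
    have := geom_sum_mul ζ k
    rw [h1, sub_self] at this
    exact (mul_eq_zero.1 this).resolve_right (sub_ne_zero.2 h2)
  change ∑ j ∈ Finset.range (k * n), z j = 0
  rw [mul_comm k n, hsum, h3, zero_mul]

lemma sin_half_pos {m : ℕ} (hm : 3 ≤ m) : 0 < Real.sin (π / (2 * m)) := by
  have hp := Real.pi_pos
  have hm0 : (0 : ℝ) < m := by positivity
  apply Real.sin_pos_of_pos_of_lt_pi (by positivity)
  rw [div_lt_iff₀ (by positivity)]
  have : (3 : ℝ) ≤ m := by exact_mod_cast hm
  nlinarith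

lemma exists_comparison {m : ℕ} (hm : 3 ≤ m) (hodd : ∃ k, Odd k ∧ 1 < k ∧ k ∣ m) :
    ∃ e : Fin m → E2, IsEdgeFamily e ∧ rRatio e ≤ 1 / Real.sin (π / (2 * m)) / (2 * m) := by
  obtain ⟨ε, hε, hsum⟩ := signs_exist hm hodd
  have hp := Real.pi_pos
  have hm0 : (0 : ℝ) < m := by positivity
  have habs : ∀ j, |ε j| = 1 := fun j => by rcases hε j with h | h <;> simp [h]
  have hnorm : ∀ j : ℕ, ‖ε j • dir (j * π / m)‖ = 1 := fun j => by
    rw [norm_smul, norm_dir, Real.norm_eq_abs, habs, one_mul]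
  refine ⟨fun j => ε j • dir ((j : ℕ) * π / m), ⟨?_, ?_, ?_⟩, ?_⟩
  · intro j h
    dsimp only at h
    have := hnorm j
    rw [h] at this
    simp at this
  · intro i j hij h
    simp only [hnorm, inv_one, one_smul] at h
    have h1 := congrArg (fun v => ⟪v, ε i • dir ((i : ℕ) * π / m)⟫) h
    simp only [real_inner_smul_left, real_inner_smul_right, inner_dir, sub_self, Real.cos_zero] at h1
    have h2 : Real.cos ((j : ℕ) * π / m - (i : ℕ) * π / m) ^ 2 = 1 := by
      rcases hε i with h | h <;> rcases hε j with h' | h' <;> rw [h, h'] at h1 <;> nlinarith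
    have h3 : Real.sin ((j : ℕ) * π / m - (i : ℕ) * π / m) = 0 := by
      have := Real.sin_sq_add_cos_sq ((j : ℕ) * π / m - (i : ℕ) * π / m)
      rw [h2] at this
      exact pow_eq_zero_iff (n := 2) (by norm_num) |>.1 (by linarith)
    obtain ⟨n, hn⟩ := Real.sin_eq_zero_iff.1 h3
    have h4 : (n : ℝ) * m = (j : ℕ) - (i : ℕ) := by
      field_simp at hn
      linarith
    have h5 : n * (m : ℤ) = (j : ℕ) - (i : ℕ) := by exact_mod_cast h4
    have h6 : ((j : ℕ) : ℤ) - (i : ℕ) = 0 := by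
      apply Int.eq_zero_of_abs_lt_dvd (m := m) ⟨n, by rw [← h5]; ring⟩
      have := i.2; have := j.2
      rw [abs_lt]; omega
    exact hij (Fin.ext (by omega))
  · rw [Finset.sum_range] at hsum
    have hre := congrArg Complex.re hsum
    have him := congrArg Complex.im hsum
    simp only [Complex.re_sum, Complex.im_sum, Complex.re_ofReal_mul, Complex.im_ofReal_mul,
      Complex.exp_ofReal_mul_I_re, Complex.exp_ofReal_mul_I_im] at hre him
    ext i; fin_cases i
    · simpa [dir, vec2] using hre
    · simpa [dir, vec2] using him
  · unfold rRatio
    simp only [hnorm]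
    simp only [Finset.sum_const, Finset.card_univ, Fintype.card_fin, nsmul_eq_mul, mul_one]
    gcongr
    apply csSup_le
    · exact ⟨_, dir 0, norm_dir 0, rfl⟩
    · rintro s ⟨u, hu, rfl⟩
      obtain ⟨θ, hθ⟩ := exists_dir u
      rw [hu, one_smul] at hθ
      rw [hθ]
      refine le_trans (le_of_eq ?_) (sum_abs_cos_le hm θ)
      rw [Finset.sum_range]
      refine Finset.sum_congr rfl fun j _ => ?_
      rw [real_inner_smul_left, inner_dir, abs_mul, habs, one_mul, ← Real.cos_neg]
      congr 2; ring

lemma core {m : ℕ} (hm : 3 ≤ m) (L α : ℕ → ℝ) (D : ℝ) (hD : 0 < D) (V : ℕ → E2)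
    (hα : ∀ k < m, α k ≤ α (k + 1)) (hαπ : ∀ k < m, α (k + 1) ≤ α k + π)
    (hαm : α m = α 0 + π) (hV : ∀ k, V (k + 1) - V k = (2 * L k) • dir (α k))
    (hVm : V m = - V 0) (hVD : ∀ k, k ≤ m → ‖V k‖ ≤ D)
    (hL : D * (m * Real.sin (π / (2 * m))) ≤ ∑ k ∈ Finset.range m, L k) :
    ∃ c, (∀ k < m, L k = c) ∧ ∀ k ≤ m, α k = α 0 + k * π / m := by
  have hp := Real.pi_pos
  have hm0 : (0 : ℝ) < m := by positivity
  have hs := sin_half_pos hm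
  set s := Real.sin (π / (2 * m)) with hsdef
  have hLk : ∀ k, 2 * L k = ⟪V (k + 1), dir (α k)⟫ - ⟪V k, dir (α k)⟫ := by
    intro k
    rw [← inner_sub_left, hV, real_inner_smul_left, inner_dir]; simp
  -- Abel summation
  have habel : 2 * ∑ k ∈ Finset.range m, L k =
      ∑ k ∈ Finset.range m, ⟪V (k + 1), dir (α k) - dir (α (k + 1))⟫ := by
    have h1 := Finset.sum_range_sub (fun k => ⟪V k, dir (α k)⟫) m
    have h2 : ⟪V m, dir (α m)⟫ = ⟪V 0, dir (α 0)⟫ := by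
      rw [hVm, hαm, dir_add_pi, inner_neg_neg]
    rw [h2, sub_self] at h1
    rw [Finset.mul_sum, ← add_zero (∑ k ∈ Finset.range m, ⟪V (k + 1), _⟫), ← h1,
      ← Finset.sum_add_distrib]
    refine Finset.sum_congr rfl fun k _ => ?_
    rw [hLk, inner_sub_right]; ring
  have hW : ∀ k < m, ‖dir (α k) - dir (α (k + 1))‖ = 2 * Real.sin ((α (k + 1) - α k) / 2) :=
    fun k hk => norm_dir_sub _ _ (hα k hk) (hαπ k hk)
  have hle : ∀ k ∈ Finset.range m, ⟪V (k + 1), dir (α k) - dir (α (k + 1))⟫ ≤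
      D * (2 * Real.sin ((α (k + 1) - α k) / 2)) := by
    intro k hk
    have hk := Finset.mem_range.1 hk
    rw [← hW k hk]
    exact (real_inner_le_norm _ _).trans
      (mul_le_mul_of_nonneg_right (hVD _ hk) (norm_nonneg _))
  -- Jensen
  have hw : ∑ k ∈ Finset.range m, (1 / m : ℝ) = 1 := by
    simp [hm0.ne']
  have hmem : ∀ k ∈ Finset.range m, (α (k + 1) - α k) / 2 ∈ Set.Icc 0 π := by
    intro k hk
    have hk := Finset.mem_range.1 hk
    constructor <;> linarith [hα k hk, hαπ k hk]
  have hmean : ∑ k ∈ Finset.range m, (1 / m : ℝ) • ((α (k + 1) - α k) / 2) = π / (2 * m) := by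
    rw [← Finset.smul_sum, ← Finset.sum_div, Finset.sum_range_sub, hαm, smul_eq_mul]
    field_simp; ring
  have hJ := strictConcaveOn_sin_Icc.concaveOn.le_map_sum (t := Finset.range m)
    (w := fun _ => (1 / m : ℝ)) (fun _ _ => by positivity) hw hmem
  have hJeq := strictConcaveOn_sin_Icc.map_sum_eq_iff (t := Finset.range m)
    (w := fun _ => (1 / m : ℝ)) (fun _ _ => by positivity) hw hmem
  rw [hmean] at hJ hJeq
  simp only [smul_eq_mul, ← Finset.mul_sum] at hJ hJeq
  rw [← hsdef] at hJ hJeq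
  set S := ∑ k ∈ Finset.range m, Real.sin ((α (k + 1) - α k) / 2) with hS
  have hJ' : S ≤ m * s := by
    rw [one_div, inv_mul_le_iff₀ hm0] at hJ; exact hJ
  have hsumle := Finset.sum_le_sum hle
  have hRS : ∑ k ∈ Finset.range m, D * (2 * Real.sin ((α (k + 1) - α k) / 2)) = 2 * D * S := by
    rw [hS, Finset.mul_sum]; exact Finset.sum_congr rfl fun _ _ => by ring
  have hSge : m * s ≤ S := by
    rw [← habel, hRS] at hsumle
    have : D * (m * s) ≤ D * S := by linarith
    exact le_of_mul_le_mul_left this hD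
  have hSeq : S = m * s := le_antisymm hJ' hSge
  have hδ : ∀ k < m, (α (k + 1) - α k) / 2 = π / (2 * m) := fun k hk =>
    hJeq.1 (by rw [hSeq]; field_simp) k (Finset.mem_range.2 hk)
  have hstep : ∀ k < m, α (k + 1) = α k + π / m := by
    intro k hk
    have := hδ k hk
    have e : π / m = 2 * (π / (2 * m)) := by field_simp
    linarith
  have hexact : ∀ k < m, ⟪V (k + 1), dir (α k) - dir (α (k + 1))⟫ = D * (2 * s) := by
    have := (Finset.sum_eq_sum_iff_of_le hle).1 (le_antisymm hsumle (by
      rw [← habel, hRS, hSeq]; linarith))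
    intro k hk
    rw [this k (Finset.mem_range.2 hk), hδ k hk]
  have hVeq : ∀ k < m, V (k + 1) = (D / (2 * s)) • (dir (α k) - dir (α (k + 1))) := by
    intro k hk
    have hWk : ‖dir (α k) - dir (α (k + 1))‖ = 2 * s := by rw [hW k hk, hδ k hk]
    have h0 : ‖V (k + 1) - (D / (2 * s)) • (dir (α k) - dir (α (k + 1)))‖ ^ 2 ≤ 0 := by
      rw [@norm_sub_sq ℝ]
      simp only [RCLike.re_to_real]
      rw [real_inner_smul_right, hexact k hk, norm_smul, hWk, Real.norm_of_nonneg (by positivity)]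
      have e1 : D / (2 * s) * (D * (2 * s)) = D ^ 2 := by field_simp
      have e2 : D / (2 * s) * (2 * s) = D := by field_simp
      rw [e1, e2]
      have := pow_le_pow_left₀ (norm_nonneg _) (hVD (k + 1) hk) 2
      linarith
    have h1 : ‖V (k + 1) - (D / (2 * s)) • (dir (α k) - dir (α (k + 1)))‖ = 0 :=
      pow_eq_zero_iff (n := 2) (by norm_num) |>.1 (le_antisymm h0 (by positivity))
    exact sub_eq_zero.1 (norm_eq_zero.1 h1)
  have hA : ∀ k < m, ⟪V (k + 1), dir (α k)⟫ = D / (2 * s) * (1 - Real.cos (π / m)) := by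
    intro k hk
    rw [hVeq k hk, real_inner_smul_left, inner_sub_left, inner_dir, inner_dir, hstep k hk]
    simp
  have hB' : ∀ k < m, ⟪V (k + 1), dir (α (k + 1))⟫ = D / (2 * s) * (Real.cos (π / m) - 1) := by
    intro k hk
    rw [hVeq k hk, real_inner_smul_left, inner_sub_left, inner_dir, inner_dir, hstep k hk]
    simp
  have hB : ∀ k < m, ⟪V k, dir (α k)⟫ = D / (2 * s) * (Real.cos (π / m) - 1) := by
    intro k hk
    rcases k with _ | k
    · have := hB' (m - 1) (by omega)
      rw [Nat.sub_add_cancel (by omega), hVm, hαm, dir_add_pi, inner_neg_neg] at this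
      exact this
    · exact hB' k (by omega)
  refine ⟨D / (2 * s) * (1 - Real.cos (π / m)), fun k hk => ?_, fun k => ?_⟩
  · have := hLk k
    rw [hA k hk, hB k hk] at this
    linarith
  · induction k with
    | zero => simp
    | succ k ih =>
      intro hk
      rw [hstep k hk, ih (by omega)]; push_cast; ring

/-- If `m ≥ 3` has an odd factor, then every optimal edge family is, up to
a common positive scaling `c`, a common rotation `φ`, and a permutation `σ`, of the form
`e_{σ(j)} = c·ε_j·(cos(φ + jπ/m), sin(φ + jπ/m))` for signs `ε ∈ {±1}^m` with
`∑ ε_j e^{ijπ/m} = 0`; in particular it is equilateral. -/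
theorem stmt13 {m : ℕ} (hm : 3 ≤ m) (hodd : ∃ k, Odd k ∧ 1 < k ∧ k ∣ m)
    (e : Fin m → E2) (hopt : IsOptimalEdgeFamily e) :
    (∃ c : ℝ, 0 < c ∧ ∃ φ : ℝ, ∃ σ : Equiv.Perm (Fin m), ∃ ε : Fin m → ℝ,
      (∀ j, ε j = 1 ∨ ε j = -1) ∧
      (∑ j : Fin m, (ε j : ℂ) * Complex.exp (π * Complex.I / m) ^ ((j : ℕ) + 1) = 0) ∧
      ∀ j : Fin m, e (σ j) = (c * ε j) • vec2 (Real.cos (φ + ((j : ℕ) + 1) * π / m))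
        (Real.sin (φ + ((j : ℕ) + 1) * π / m))) ∧
    ∀ i j : Fin m, ‖e i‖ = ‖e j‖ := by
  have hp := Real.pi_pos
  have hm0 : (0 : ℝ) < m := by positivity
  have hs := sin_half_pos hm
  obtain ⟨⟨hne, -, hsum0⟩, hmin⟩ := hopt
  obtain ⟨e', he', hr'⟩ := exists_comparison hm hodd
  have hr := (hmin e' he').trans hr'
  choose a t ha0 hapi ht he using fun j => exists_half (e j)
  set σ := Tuple.sort a with hσ
  have hmono : Monotone (a ∘ σ) := Tuple.monotone_sort a
  set z : Fin m := ⟨0, by omega⟩ with hz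
  set α : ℕ → ℝ := fun k => if h : k < m then a (σ ⟨k, h⟩) else a (σ z) + π with hαd
  set L : ℕ → ℝ := fun k => if h : k < m then ‖e (σ ⟨k, h⟩)‖ else 0 with hLd
  have hαlt : ∀ k (h : k < m), α k = a (σ ⟨k, h⟩) := fun k h => by simp only [hαd, dif_pos h]
  have hLlt : ∀ k (h : k < m), L k = ‖e (σ ⟨k, h⟩)‖ := fun k h => by simp only [hLd, dif_pos h]
  have hLnn : ∀ k, 0 ≤ L k := by
    intro k; simp only [hLd]; split_ifs <;> positivity
  have hα0 : α 0 = a (σ z) := hαlt 0 (by omega)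
  have hαm : α m = α 0 + π := by rw [hα0]; simp only [hαd, dif_neg (lt_irrefl m)]
  set D := sSup {s | ∃ u : E2, ‖u‖ = 1 ∧ s = ∑ j, |⟪e j, u⟫|} with hD
  have hbdd : BddAbove {s | ∃ u : E2, ‖u‖ = 1 ∧ s = ∑ j, |⟪e j, u⟫|} := by
    refine ⟨∑ j, ‖e j‖, ?_⟩
    rintro s ⟨u, hu, rfl⟩
    refine Finset.sum_le_sum fun j _ => ?_
    have := abs_real_inner_le_norm (e j) u
    rwa [hu, mul_one] at this
  have hDu : ∀ u : E2, ‖u‖ = 1 → ∑ j, |⟪e j, u⟫| ≤ D := fun u hu => le_csSup hbdd ⟨u, hu, rfl⟩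
  have hsumL : ∑ k ∈ Finset.range m, L k = ∑ j, ‖e j‖ := by
    rw [Finset.sum_range, ← Equiv.sum_comp σ (fun j => ‖e j‖)]
    exact Finset.sum_congr rfl fun j _ => hLlt j j.2
  have hpos : ∀ j, 0 < ‖e j‖ := fun j => norm_pos_iff.2 (hne j)
  have hperim : 0 < ∑ j, ‖e j‖ := Finset.sum_pos (fun j _ => hpos j) ⟨z, Finset.mem_univ _⟩
  have habs : ∀ j, |t j| = 1 := fun j => by rcases ht j with h | h <;> simp [h]
  have hproj : ∀ u : E2, ∑ k ∈ Finset.range m, |⟪L k • dir (α k), u⟫| = ∑ j, |⟪e j, u⟫| := by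
    intro u
    rw [Finset.sum_range, ← Equiv.sum_comp σ (fun j => |⟪e j, u⟫|)]
    refine Finset.sum_congr rfl fun j _ => ?_
    rw [hLlt j j.2, hαlt j j.2]
    conv_rhs => rw [he (σ j)]
    rw [real_inner_smul_left, real_inner_smul_left, abs_mul, abs_mul, abs_mul, habs, mul_one]
  have hDpos : 0 < D := by
    have h1 : ‖‖e z‖⁻¹ • e z‖ = 1 := by
      rw [norm_smul, norm_inv, norm_norm, inv_mul_cancel₀ (hpos z).ne']
    refine lt_of_lt_of_le ?_ (hDu _ h1)
    refine lt_of_lt_of_le ?_ (Finset.single_le_sum (f := fun j => |⟪e j, ‖e z‖⁻¹ • e z⟫|)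
      (fun j _ => abs_nonneg _) (Finset.mem_univ z))
    rw [real_inner_smul_right, real_inner_self_eq_norm_sq]
    have := hpos z
    positivity
  set T : E2 := ∑ k ∈ Finset.range m, L k • dir (α k) with hT
  set V : ℕ → E2 := fun k => (2 : ℝ) • (∑ j ∈ Finset.range k, L j • dir (α j)) - T with hVd
  have hV : ∀ k, V (k + 1) - V k = (2 * L k) • dir (α k) := by
    intro k
    simp only [hVd]
    rw [Finset.sum_range_succ, smul_add, smul_smul]
    abel
  have hVm : V m = - V 0 := by
    simp only [hVd]
    rw [← hT, two_smul]; simp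
  have hVu : ∀ k ≤ m, ∀ u : E2, ⟪V k, u⟫ ≤ ∑ j, |⟪e j, u⟫| := by
    intro k hk u
    rw [← hproj u]
    have e1 : V k = ∑ j ∈ Finset.range k, L j • dir (α j) - ∑ j ∈ Finset.Ico k m, L j • dir (α j) := by
      simp only [hVd, hT]
      rw [← Finset.sum_range_add_sum_Ico _ hk, two_smul]; abel
    rw [e1, inner_sub_left, sum_inner, sum_inner, ← Finset.sum_range_add_sum_Ico _ hk, sub_eq_add_neg,
      ← Finset.sum_neg_distrib]
    exact add_le_add (Finset.sum_le_sum fun j _ => le_abs_self _)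
      (Finset.sum_le_sum fun j _ => neg_le_abs _)
  have hVD : ∀ k, k ≤ m → ‖V k‖ ≤ D := by
    intro k hk
    by_cases h : V k = 0
    · rw [h, norm_zero]; exact hDpos.le
    · have hn : 0 < ‖V k‖ := norm_pos_iff.2 h
      have h1 : ‖‖V k‖⁻¹ • V k‖ = 1 := by
        rw [norm_smul, norm_inv, norm_norm, inv_mul_cancel₀ hn.ne']
      have h2 := (hVu k hk _).trans (hDu _ h1)
      rw [real_inner_smul_right, real_inner_self_eq_norm_sq] at h2
      have h3 : ‖V k‖⁻¹ * ‖V k‖ ^ 2 = ‖V k‖ := by field_simp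
      rwa [h3] at h2
  have hLge : D * (m * Real.sin (π / (2 * m))) ≤ ∑ k ∈ Finset.range m, L k := by
    rw [hsumL]
    unfold rRatio at hr
    rw [← hD, div_div, div_le_div_iff₀ (by positivity) (by positivity)] at hr
    linarith
  have hαmono : ∀ k < m, α k ≤ α (k + 1) := by
    intro k hk
    rw [hαlt k hk]
    by_cases h : k + 1 < m
    · rw [hαlt _ h]
      exact hmono (Fin.mk_le_mk.2 (Nat.le_succ k))
    · have : k + 1 = m := by omega
      rw [this, hαm, hα0]
      linarith [hapi (σ ⟨k, hk⟩), ha0 (σ z)]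
  have hαπ : ∀ k < m, α (k + 1) ≤ α k + π := by
    intro k hk
    rw [hαlt k hk]
    by_cases h : k + 1 < m
    · rw [hαlt _ h]
      linarith [hapi (σ ⟨k + 1, h⟩), ha0 (σ ⟨k, hk⟩)]
    · have : k + 1 = m := by omega
      rw [this, hαm, hα0]
      have : a (σ z) ≤ a (σ ⟨k, hk⟩) := hmono (Fin.mk_le_mk.2 (Nat.zero_le k))
      linarith
  obtain ⟨c, hc, hαk⟩ := core hm L α D hDpos V hαmono hαπ hαm hV hVm hVD hLge
  have hnorm : ∀ j, ‖e j‖ = c := by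
    intro j
    have := hc (σ.symm j) (σ.symm j).2
    rw [hLlt _ (σ.symm j).2] at this
    simpa using this
  have hcpos : 0 < c := by rw [← hnorm z]; exact hpos z
  have hform : ∀ j : Fin m, e (σ j) = (c * t (σ j)) •
      vec2 (Real.cos (α 0 - π / m + ((j : ℕ) + 1) * π / m))
        (Real.sin (α 0 - π / m + ((j : ℕ) + 1) * π / m)) := by
    intro j
    have h1 : a (σ j) = α 0 - π / m + ((j : ℕ) + 1) * π / m := by
      rw [← hαlt j j.2, hαk j j.2.le]; ring
    rw [← h1]
    conv_lhs => rw [he (σ j), hnorm]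
    rfl
  refine ⟨⟨c, hcpos, α 0 - π / m, σ, fun j => t (σ j), fun j => ht _, ?_, hform⟩,
    fun i j => by rw [hnorm, hnorm]⟩
  have hsum1 : ∑ j, e (σ j) = 0 := by rw [Equiv.sum_comp σ e]; exact hsum0
  simp only [hform] at hsum1
  set φ := α 0 - π / m with hφ
  have h0 := congrArg (fun v : E2 => v 0) hsum1
  have h1 := congrArg (fun v : E2 => v 1) hsum1
  simp [vec2, mul_assoc, ← Finset.mul_sum, hcpos.ne'] at h0 h1
  have key : Complex.exp (φ * Complex.I) *
      ∑ j : Fin m, (t (σ j) : ℂ) * Complex.exp (π * Complex.I / m) ^ ((j : ℕ) + 1) = 0 := by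
    have : ∀ j : Fin m, Complex.exp (φ * Complex.I) * ((t (σ j) : ℂ) *
        Complex.exp (π * Complex.I / m) ^ ((j : ℕ) + 1)) =
        (t (σ j) : ℂ) * Complex.exp ((φ + ((j : ℕ) + 1) * (π / m) : ℝ) * Complex.I) := by
      intro j
      rw [← Complex.exp_nat_mul, mul_left_comm, ← Complex.exp_add]
      congr 2; push_cast; ring
    rw [Finset.mul_sum]
    simp only [this]
    apply Complex.ext
    · simp only [Complex.re_sum, Complex.re_ofReal_mul, Complex.exp_ofReal_mul_I_re]
      simpa [mul_div_assoc] using h0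
    · simp only [Complex.im_sum, Complex.im_ofReal_mul, Complex.exp_ofReal_mul_I_im]
      simpa [mul_div_assoc] using h1
  exact (mul_eq_zero.1 key).resolve_left (Complex.exp_ne_zero _)
end
end

section
/- For every integer m ≥ 3 with an odd factor, max_{θ ∈ ℝ} ∑_{j=1}^m |cos(θ − jπ/m)| = 1/sin(π/(2m)). -/
noncomputable section

open Real
open scoped RealInnerProductSpace ENNReal

/-- The auxiliary sum of absolute sines. -/
def absSinSum (m : ℕ) (t : ℝ) : ℝ := ∑ j ∈ Finset.range m, |Real.sin (t + j * (π / m))|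

lemma absSinSum_periodic {m : ℕ} (hm : 0 < m) : Function.Periodic (absSinSum m) (π / m) := by
  intro t
  have hm' : (m : ℝ) ≠ 0 := by positivity
  have h1 := Finset.sum_range_succ (fun j : ℕ => |Real.sin (t + j * (π / m))|) m
  have h2 := Finset.sum_range_succ' (fun j : ℕ => |Real.sin (t + j * (π / m))|) m
  have h3 : (m : ℝ) * (π / m) = π := by field_simp
  simp only [h3, Real.sin_add_pi, abs_neg] at h1
  simp only [Nat.cast_zero, zero_mul, add_zero] at h2
  have h4 : absSinSum m (t + π / m)
      = ∑ j ∈ Finset.range m, |Real.sin (t + ((j + 1 : ℕ) : ℝ) * (π / m))| := by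
    unfold absSinSum
    refine Finset.sum_congr rfl fun j _ => ?_
    congr 2
    push_cast
    ring
  rw [h4]
  unfold absSinSum
  linarith

lemma sin_sum_telescope (d t : ℝ) (n : ℕ) :
    2 * Real.sin (d / 2) * ∑ j ∈ Finset.range n, Real.sin (t + j * d)
      = Real.cos (t - d / 2) - Real.cos (t - d / 2 + n * d) := by
  induction n with
  | zero => simp
  | succ n ih =>
    rw [Finset.sum_range_succ, mul_add, ih]
    have e1 : t - d / 2 + n * d = (t + n * d) - d / 2 := by ring
    have e2 : t - d / 2 + ((n + 1 : ℕ) : ℝ) * d = (t + n * d) + d / 2 := by push_cast; ring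
    rw [e1, e2, Real.cos_sub (t + n * d), Real.cos_add (t + n * d)]
    ring

lemma absSinSum_eq {m : ℕ} (hm : 0 < m) {t : ℝ} (h0 : 0 ≤ t) (h1 : t ≤ π / m) :
    Real.sin (π / (2 * m)) * absSinSum m t = Real.cos (t - π / (2 * m)) := by
  have hm' : (0 : ℝ) < m := by positivity
  have h3 : (m : ℝ) * (π / m) = π := by field_simp
  have hd : 0 < π / m := by positivity
  have e : π / (2 * m) = π / m / 2 := by field_simp
  have h := sin_sum_telescope (π / m) t m
  rw [h3, Real.cos_add_pi] at h
  have : absSinSum m t = ∑ j ∈ Finset.range m, Real.sin (t + j * (π / m)) := by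
    refine Finset.sum_congr rfl fun j hj => abs_of_nonneg ?_
    have hj' : (j : ℝ) + 1 ≤ m := by exact_mod_cast Finset.mem_range.mp hj
    apply Real.sin_nonneg_of_nonneg_of_le_pi
    · positivity
    · nlinarith
  rw [this, e]
  linarith

/-- For every integer `m ≥ 3` with an odd factor,
`max_{θ ∈ ℝ} ∑_{j=1}^m |cos(θ − jπ/m)| = 1/sin(π/(2m))`. -/
theorem stmt14 {m : ℕ} (hm : 3 ≤ m) (hodd : ∃ k, Odd k ∧ 1 < k ∧ k ∣ m) :
    IsGreatest {s : ℝ | ∃ θ : ℝ, s = ∑ j : Fin m, |Real.cos (θ - ((j : ℕ) + 1) * π / m)|}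
      (1 / Real.sin (π / (2 * m))) := by
  clear hodd
  have hm0 : 0 < m := by omega
  have hm' : (1 : ℝ) ≤ m := by exact_mod_cast hm0
  have hd : 0 < π / m := by positivity
  have hs : 0 < Real.sin (π / (2 * m)) := by
    apply Real.sin_pos_of_pos_of_lt_pi
    · positivity
    · rw [div_lt_iff₀ (by positivity)]
      nlinarith [Real.pi_pos]
  have key : ∀ θ : ℝ, ∑ j : Fin m, |Real.cos (θ - ((j : ℕ) + 1) * π / m)|
      = absSinSum m (π / 2 - θ + π / m) := by
    intro θ
    unfold absSinSum
    rw [← Fin.sum_univ_eq_sum_range (fun j : ℕ => |Real.sin (π / 2 - θ + π / m + j * (π / m))|)]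
    refine Finset.sum_congr rfl fun j _ => ?_
    rw [← Real.sin_pi_div_two_sub]
    congr 2
    ring
  constructor
  · refine ⟨π / 2 + π / m - π / (2 * m), ?_⟩
    rw [key]
    have e : π / 2 - (π / 2 + π / m - π / (2 * m)) + π / m = π / (2 * m) := by ring
    have e2 : π / (2 * m) = π / m / 2 := by field_simp
    have h := absSinSum_eq hm0 (t := π / (2 * m)) (by positivity) (by rw [e2]; linarith)
    rw [sub_self, Real.cos_zero] at h
    rw [e, div_eq_iff hs.ne']
    linarith
  · rintro s ⟨θ, rfl⟩
    rw [key]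
    obtain ⟨t, ht, he⟩ := (absSinSum_periodic hm0).exists_mem_Ico₀ hd (π / 2 - θ + π / m)
    rw [he, le_div_iff₀ hs, mul_comm, absSinSum_eq hm0 ht.1 ht.2.le]
    exact Real.cos_le_one _
end
end

section
/- Let m ≥ 3 be an integer with an odd factor and let A = [a_1,…,a_m]ᵀ ∈ ℝ^{m×2} satisfy β_A = inf{β_M : M ∈ ℝ^{m×2}} (A is an optimal frame). Then the rows of A form a tight frame, ∑_{j=1}^m a_j a_jᵀ = ((1/2)·∑_{j=1}^m ‖a_j‖₂²)·I₂, and all rows have the same norm: ‖a_1‖₂ = ‖a_2‖₂ = … = ‖a_m‖₂. -/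
noncomputable section

open Real
open scoped RealInnerProductSpace ENNReal

theorem core_weight {m : ℕ} (θ : ℕ → ℝ) (hθ : Monotone θ) (hθm : θ m = θ 0 + π) (j : ℕ) (hj : j < m) :
    ∑ k ∈ Finset.range m, sin ((θ (k+1) - θ k)/2) * |sin ((θ k + θ (k+1))/2 - θ j)| = 1 := by
  set F : ℕ → ℝ := fun k => if k ≤ j then cos (θ k - θ j) / 2 else 1 - cos (θ k - θ j) / 2 with hF
  have hprod : ∀ k, sin ((θ (k+1) - θ k)/2) * sin ((θ k + θ (k+1))/2 - θ j)
      = (cos (θ k - θ j) - cos (θ (k+1) - θ j))/2 := by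
    intro k
    rw [Real.cos_sub_cos]
    have h1 : (θ k - θ j + (θ (k+1) - θ j))/2 = (θ k + θ (k+1))/2 - θ j := by ring
    have h2 : (θ k - θ j - (θ (k+1) - θ j))/2 = -((θ (k+1) - θ k)/2) := by ring
    rw [h1, h2, Real.sin_neg]; ring
  have key : ∀ k ∈ Finset.range m, sin ((θ (k+1) - θ k)/2) * |sin ((θ k + θ (k+1))/2 - θ j)|
      = F (k+1) - F k := by
    intro k hk
    rw [Finset.mem_range] at hk
    have a1 : θ k ≤ θ (k+1) := hθ (by omega)
    have a2 : θ (k+1) ≤ θ m := hθ (by omega)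
    have a3 : θ 0 ≤ θ j := hθ (by omega)
    have a4 : θ 0 ≤ θ k := hθ (by omega)
    have a5 : θ j ≤ θ m := hθ (by omega)
    rcases lt_or_ge k j with h | h
    · have a6 : θ (k+1) ≤ θ j := hθ (by omega)
      rw [abs_of_nonpos (Real.sin_nonpos_of_nonpos_of_neg_pi_le (by linarith) (by linarith)), mul_neg, hprod]
      simp only [hF]
      rw [if_pos (by omega), if_pos (by omega)]; ring
    · have a6 : θ j ≤ θ k := hθ (by omega)
      rw [abs_of_nonneg (Real.sin_nonneg_of_nonneg_of_le_pi (by linarith) (by linarith)), hprod]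
      simp only [hF]
      rw [if_neg (by omega)]
      rcases h.eq_or_lt with h | h
      · subst h; simp; ring
      · rw [if_neg (by omega)]; ring
  rw [Finset.sum_congr rfl key, Finset.sum_range_sub]
  simp only [hF]
  rw [if_neg (by omega), if_pos (by omega), hθm]
  have : θ 0 + π - θ j = (θ 0 - θ j) + π := by ring
  rw [this, Real.cos_add_pi]; ring

theorem core_jensen {m : ℕ} (hm : 0 < m) (θ : ℕ → ℝ) (hθ : Monotone θ) (hθm : θ m = θ 0 + π) :
    ∑ k ∈ Finset.range m, sin ((θ (k+1) - θ k)/2) ≤ m * sin (π / (2*m)) ∧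
    (∑ k ∈ Finset.range m, sin ((θ (k+1) - θ k)/2) = m * sin (π / (2*m)) →
      ∀ k < m, θ (k+1) - θ k = π / m) := by
  have hm' : (0:ℝ) < m := by exact_mod_cast hm
  have hw : ∑ i ∈ Finset.range m, (1/(m:ℝ)) = 1 := by simp; field_simp
  have hmem : ∀ k ∈ Finset.range m, (θ (k+1) - θ k)/2 ∈ Set.Icc 0 π := by
    intro k hk
    rw [Finset.mem_range] at hk
    have a1 : θ k ≤ θ (k+1) := hθ (by omega)
    have a2 : θ (k+1) ≤ θ m := hθ (by omega)
    have a4 : θ 0 ≤ θ k := hθ (by omega)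
    constructor <;> linarith [Real.pi_pos]
  have hs : ∑ k ∈ Finset.range m, (1/(m:ℝ)) • ((θ (k+1) - θ k)/2) = π / (2*m) := by
    simp only [smul_eq_mul]
    rw [← Finset.mul_sum, ← Finset.sum_div, Finset.sum_range_sub, hθm]
    field_simp; ring
  constructor
  · have := strictConcaveOn_sin_Icc.concaveOn.le_map_sum (t := Finset.range m) (w := fun _ => 1/(m:ℝ))
      (p := fun k => (θ (k+1) - θ k)/2) (fun _ _ => by positivity) hw hmem
    rw [hs] at this
    simp only [smul_eq_mul] at this
    rw [← Finset.mul_sum, one_div, inv_mul_le_iff₀ hm'] at this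
    exact this
  · intro h k hk
    have := (strictConcaveOn_sin_Icc.map_sum_eq_iff (t := Finset.range m) (w := fun _ => 1/(m:ℝ))
      (p := fun k => (θ (k+1) - θ k)/2) (fun _ _ => by positivity) hw hmem).1 (by
        rw [hs]
        simp only [smul_eq_mul]
        rw [← Finset.mul_sum, h]; field_simp) k (Finset.mem_range.2 hk)
    rw [hs] at this
    field_simp at this ⊢
    linarith

theorem core_le {m : ℕ} (hm : 0 < m) (r θ : ℕ → ℝ) (hr : ∀ k, 0 ≤ r k)
    (hθ : Monotone θ) (hθm : θ m = θ 0 + π) (D : ℝ)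
    (hD : ∀ φ, ∑ j ∈ Finset.range m, r j * |sin (φ - θ j)| ≤ D) :
    ∑ j ∈ Finset.range m, r j ≤ D * (m * sin (π / (2*m))) ∧
    (0 < D → ∑ j ∈ Finset.range m, r j = D * (m * sin (π / (2*m))) →
      ∀ j < m, r j = D * sin (π / (2*m))) := by
  have hm' : (0:ℝ) < m := by exact_mod_cast hm
  have hD0 : 0 ≤ D := le_trans (Finset.sum_nonneg fun i _ => mul_nonneg (hr i) (abs_nonneg _)) (hD 0)
  obtain ⟨J1, J2⟩ := core_jensen hm θ hθ hθm
  set W : ℕ → ℝ := fun k => sin ((θ (k+1) - θ k)/2) with hW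
  have hW0 : ∀ k ∈ Finset.range m, 0 ≤ W k := by
    intro k hk
    rw [Finset.mem_range] at hk
    have a1 : θ k ≤ θ (k+1) := hθ (by omega)
    have a2 : θ (k+1) ≤ θ m := hθ (by omega)
    have a4 : θ 0 ≤ θ k := hθ (by omega)
    apply Real.sin_nonneg_of_nonneg_of_le_pi <;> linarith [Real.pi_pos]
  have hT : ∑ j ∈ Finset.range m, r j = ∑ k ∈ Finset.range m, W k *
      ∑ j ∈ Finset.range m, r j * |sin ((θ k + θ (k+1))/2 - θ j)| := by
    simp only [Finset.mul_sum]
    rw [Finset.sum_comm]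
    apply Finset.sum_congr rfl
    intro j hj
    have := core_weight θ hθ hθm j (Finset.mem_range.1 hj)
    calc r j = r j * 1 := by ring
      _ = _ := by
        rw [← this, Finset.mul_sum]
        apply Finset.sum_congr rfl
        intro k _
        simp only [hW]; ring
  have hle : ∀ k ∈ Finset.range m, W k *
      ∑ j ∈ Finset.range m, r j * |sin ((θ k + θ (k+1))/2 - θ j)| ≤ W k * D :=
    fun k hk => mul_le_mul_of_nonneg_left (hD _) (hW0 k hk)
  have h1 : ∑ j ∈ Finset.range m, r j ≤ (∑ k ∈ Finset.range m, W k) * D := by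
    rw [hT, Finset.sum_mul]; exact Finset.sum_le_sum hle
  have h2 : (∑ k ∈ Finset.range m, W k) * D ≤ D * (m * sin (π / (2*m))) := by
    rw [mul_comm]; exact mul_le_mul_of_nonneg_left J1 hD0
  refine ⟨h1.trans h2, fun hDp hEq => ?_⟩
  have e1 : (∑ k ∈ Finset.range m, W k) * D = D * (m * sin (π / (2*m))) := le_antisymm h2 (hEq ▸ h1)
  have e2 : ∑ k ∈ Finset.range m, W k = m * sin (π / (2*m)) := by
    rw [mul_comm] at e1; exact mul_left_cancel₀ hDp.ne' e1
  have hα := J2 e2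
  have hspos : 0 < sin (π / (2*m)) := by
    have h1m : (1:ℝ) ≤ m := by exact_mod_cast hm
    apply Real.sin_pos_of_pos_of_lt_pi
    · positivity
    · rw [div_lt_iff₀ (by positivity)]; nlinarith [Real.pi_pos]
  have e3 : ∀ k ∈ Finset.range m, W k *
      ∑ j ∈ Finset.range m, r j * |sin ((θ k + θ (k+1))/2 - θ j)| = W k * D := by
    apply (Finset.sum_eq_sum_iff_of_le hle).1
    rw [← hT, ← Finset.sum_mul, e1, hEq]
  -- sinusoid on each interval
  set H : ℕ → ℝ → ℝ := fun k φ => ∑ j ∈ Finset.range m, (if j ≤ k then r j else - r j) * sin (φ - θ j) with hH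
  have hHle : ∀ k φ, H k φ ≤ D := by
    intro k φ
    refine le_trans (Finset.sum_le_sum fun j _ => ?_) (hD φ)
    have := hr j
    split_ifs
    · exact mul_le_mul_of_nonneg_left (le_abs_self _) this
    · rw [neg_mul, ← mul_neg]
      exact mul_le_mul_of_nonneg_left (neg_le_abs _) this
  have hHmid : ∀ k < m, H k ((θ k + θ (k+1))/2) = D := by
    intro k hk
    have hWk : W k = sin (π / (2*m)) := by
      simp only [hW]; rw [hα k hk]; congr 1; field_simp
    have := mul_left_cancel₀ (by rw [hWk]; exact hspos.ne') (e3 k (Finset.mem_range.2 hk))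
    rw [← this]
    apply Finset.sum_congr rfl
    intro j hj
    rw [Finset.mem_range] at hj
    have a1 : θ k ≤ θ (k+1) := hθ (by omega)
    have a2 : θ (k+1) ≤ θ m := hθ (by omega)
    have a3 : θ 0 ≤ θ j := hθ (by omega)
    have a4 : θ 0 ≤ θ k := hθ (by omega)
    have a5 : θ j ≤ θ m := hθ (by omega)
    split_ifs with h
    · have a6 : θ j ≤ θ k := hθ (by omega)
      rw [abs_of_nonneg (Real.sin_nonneg_of_nonneg_of_le_pi (by linarith) (by linarith))]
    · have a6 : θ (k+1) ≤ θ j := hθ (by omega)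
      rw [abs_of_nonpos (Real.sin_nonpos_of_nonpos_of_neg_pi_le (by linarith) (by linarith))]
      ring
  have hHform : ∀ k < m, ∀ t, H k ((θ k + θ (k+1))/2 + t) = D * cos t := by
    intro k hk
    set c := (θ k + θ (k+1))/2 with hc
    set G := ∑ j ∈ Finset.range m, (if j ≤ k then r j else - r j) * cos (c - θ j) with hG
    have hexp : ∀ t, H k (c + t) = D * cos t + G * sin t := by
      intro t
      rw [← hHmid k hk, hG, Finset.sum_mul, Finset.sum_mul, ← Finset.sum_add_distrib]
      apply Finset.sum_congr rfl
      intro j _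
      rw [show c + t - θ j = (c - θ j) + t by ring, Real.sin_add]
      ring
    have hG0 : G = 0 := by
      have hd : HasDerivAt (fun t => D * cos t + G * sin t) (D * (-sin 0) + G * cos 0) 0 :=
        ((Real.hasDerivAt_cos 0).const_mul D).add ((Real.hasDerivAt_sin 0).const_mul G)
      have hmax : IsLocalMax (fun t => D * cos t + G * sin t) 0 := by
        apply Filter.Eventually.of_forall
        intro t
        show D * cos t + G * sin t ≤ D * cos 0 + G * sin 0
        rw [← hexp]; simpa using hHle _ _
      simpa using hmax.hasDerivAt_eq_zero hd
    intro t
    rw [hexp, hG0]; ring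
  have hpos : ∀ j < m, 0 < j → r j = D * sin (π / (2*m)) := by
    intro k hk hk0
    obtain ⟨l, rfl⟩ : ∃ l, k = l + 1 := ⟨k-1, by omega⟩
    have hdiff : H (l+1) (θ (l+1) + π/2) - H l (θ (l+1) + π/2) = 2 * r (l+1) := by
      simp only [hH]
      rw [← Finset.sum_sub_distrib, Finset.sum_eq_single (l+1)]
      · simp; ring
      · intro j _ hj
        by_cases h : j ≤ l
        · rw [if_pos h, if_pos (by omega)]; ring
        · rw [if_neg h, if_neg (by omega)]; ring
      · intro h; exact absurd (Finset.mem_range.2 hk) h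
    have b1 := hα (l+1) hk
    have b2 := hα l (by omega)
    have b3 : π / (2*m) = (π / m)/2 := by field_simp
    have c1 := hHform (l+1) hk (π/2 - π/(2*m))
    have c2 := hHform l (by omega) (π/2 + π/(2*m))
    rw [show (θ (l+1) + θ (l+1+1))/2 + (π/2 - π/(2*m)) = θ (l+1) + π/2 by rw [b3]; linarith,
      Real.cos_pi_div_two_sub] at c1
    rw [show (θ l + θ (l+1))/2 + (π/2 + π/(2*m)) = θ (l+1) + π/2 by rw [b3]; linarith,
      add_comm (π/2), Real.cos_add_pi_div_two] at c2
    linarith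
  intro j hj
  rcases Nat.eq_zero_or_pos j with rfl | h
  · obtain ⟨n, rfl⟩ : ∃ n, m = n + 1 := ⟨m-1, by omega⟩
    rw [Finset.sum_range_succ', Finset.sum_congr rfl (fun i hi =>
      hpos (i+1) (by have := Finset.mem_range.1 hi; omega) (by omega))] at hEq
    simp only [Finset.sum_const, Finset.card_range, nsmul_eq_mul] at hEq
    push_cast at hEq ⊢
    linarith
  · exact hpos j hj h

theorem abs_sin_shift (x : ℝ) (n : ℤ) : |sin (x + n * π)| = |sin x| := by
  rw [Real.sin_add_int_mul_pi, abs_mul]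
  simp

theorem abs_cos_shift (x : ℝ) (n : ℤ) : |cos (x - n * π)| = |cos x| := by
  rw [Real.cos_sub_int_mul_pi, abs_mul]
  simp

theorem core_fin {m : ℕ} (hm : 0 < m) (r t : Fin m → ℝ) (hr : ∀ k, 0 ≤ r k) (D : ℝ)
    (hD : ∀ φ, ∑ j, r j * |cos (φ - t j)| ≤ D) :
    ∑ j, r j ≤ D * (m * sin (π / (2*m))) ∧
    (0 < D → ∑ j, r j = D * (m * sin (π / (2*m))) →
      ∀ j, r j = D * sin (π / (2*m))) := by
  set t' : Fin m → ℝ := fun j => t j - ⌊t j / π⌋ * π with ht'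
  have ht0 : ∀ j, 0 ≤ t' j := fun j => by
    have := (le_div_iff₀ Real.pi_pos).1 (Int.floor_le (t j / π))
    simp only [ht']; linarith
  have ht1 : ∀ j, t' j ≤ π := fun j => by
    have := (div_lt_iff₀ Real.pi_pos).1 (Int.lt_floor_add_one (t j / π))
    simp only [ht']; linarith
  set σ := Tuple.sort t' with hσ
  have hmono := Tuple.monotone_sort t'
  set θ : ℕ → ℝ := fun k => if h : k < m then t' (σ ⟨k, h⟩) else t' (σ ⟨0, hm⟩) + π with hθ
  set ρ : ℕ → ℝ := fun k => if h : k < m then r (σ ⟨k, h⟩) else 0 with hρ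
  have hθmono : Monotone θ := by
    intro i j hij
    simp only [hθ]
    split_ifs with h1 h2 h2
    · exact hmono (show (⟨i, h1⟩ : Fin m) ≤ ⟨j, h2⟩ from hij)
    · linarith [ht1 (σ ⟨i, h1⟩), ht0 (σ ⟨0, hm⟩)]
    · omega
    · exact le_rfl
  have hθm : θ m = θ 0 + π := by simp [hθ, hm]
  have hρ0 : ∀ k, 0 ≤ ρ k := by
    intro k; simp only [hρ]; split_ifs
    · exact hr _
    · exact le_rfl
  have hsum : ∑ j ∈ Finset.range m, ρ j = ∑ j, r j := by
    rw [Finset.sum_range, ← Equiv.sum_comp σ r]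
    apply Finset.sum_congr rfl
    intro j _; simp [hρ]
  have hD' : ∀ φ, ∑ j ∈ Finset.range m, ρ j * |sin (φ - θ j)| ≤ D := by
    intro φ
    refine le_trans (le_of_eq ?_) (hD (φ - π/2))
    rw [Finset.sum_range, ← Equiv.sum_comp σ (fun j => r j * |cos (φ - π/2 - t j)|)]
    apply Finset.sum_congr rfl
    intro j _
    have e : sin (φ - t' (σ j)) = sin ((φ - t (σ j)) + (⌊t (σ j) / π⌋ : ℤ) * π) := by
      congr 1; simp only [ht']; ring
    have e2 : cos (φ - π/2 - t (σ j)) = sin (φ - t (σ j)) := by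
      rw [← Real.cos_sub_pi_div_two]; congr 1; ring
    simp only [hρ, hθ, Fin.is_lt, dif_pos, Fin.eta]
    rw [e, abs_sin_shift, e2]
  obtain ⟨h1, h2⟩ := core_le hm ρ θ hρ0 hθmono hθm D hD'
  rw [hsum] at h1 h2
  refine ⟨h1, fun hp he j => ?_⟩
  have := h2 hp he (σ.symm j) (σ.symm j).2
  simpa [hρ] using this

theorem harm_sum {m : ℕ} (hm : 0 < m) (φ : ℝ) :
    (∑ j ∈ Finset.range m, |cos (φ - j * (π / m))|) * sin (π / (2*m)) ≤ 1 := by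
  have hm' : (0:ℝ) < m := by exact_mod_cast hm
  have hper : Function.Periodic (fun φ : ℝ => ∑ j ∈ Finset.range m, |cos (φ - j * (π / m))|) (π / m) := by
    intro x
    obtain ⟨n, rfl⟩ : ∃ n, m = n + 1 := ⟨m-1, by omega⟩
    show ∑ j ∈ Finset.range (n+1), |cos (x + π / (n+1:ℕ) - j * (π / (n+1:ℕ)))| = ∑ j ∈ Finset.range (n+1), |cos (x - j * (π / (n+1:ℕ)))|
    rw [Finset.sum_range_succ', Finset.sum_range_succ]
    congr 1
    · apply Finset.sum_congr rfl
      intro j _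
      congr 2; push_cast; ring
    · rw [← abs_cos_shift (x + π / (n+1:ℕ) - (0:ℕ) * (π / (n+1:ℕ))) 1]
      congr 2
      push_cast
      field_simp
      ring
  obtain ⟨y, hy, he⟩ := hper.exists_mem_Ico (by positivity) φ (π/2 - π/m)
  refine le_of_eq_of_le (congrArg (fun z => z * sin (π / (2*m))) he) ?_
  show (∑ j ∈ Finset.range m, |cos (y - j * (π / m))|) * sin (π / (2*m)) ≤ 1
  have habs : ∀ j ∈ Finset.range m, |cos (y - j * (π / m))| * sin (π / (2*m)) =
      sin (y + π/(2*m) - (j:ℕ) * (π/m)) / 2 - sin (y + π/(2*m) - (j+1:ℕ) * (π/m)) / 2 := by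
    intro j hj
    have hj1 : (j:ℝ) + 1 ≤ m := by exact_mod_cast Finset.mem_range.1 hj
    have hpm : 0 < π / m := by positivity
    have hmm : m * (π / m) = π := by field_simp
    rw [abs_of_nonneg]
    · have : sin (y + π/(2*m) - (j:ℕ) * (π/m)) - sin (y + π/(2*m) - (j+1:ℕ) * (π/m)) = 2 * (cos (y - j * (π / m)) * sin (π / (2*m))) := by
        rw [Real.sin_sub_sin]
        rw [show (y + π/(2*m) - (j:ℕ) * (π/m) - (y + π/(2*m) - (j+1:ℕ) * (π/m)))/2 = π / (2*m) by push_cast; field_simp; ring,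
          show (y + π/(2*m) - (j:ℕ) * (π/m) + (y + π/(2*m) - (j+1:ℕ) * (π/m)))/2 = y - j * (π / m) by push_cast; field_simp; ring]
        ring
      linarith
    · apply Real.cos_nonneg_of_neg_pi_div_two_le_of_le
      · nlinarith [hy.1]
      · have : 0 ≤ (j:ℝ) * (π/m) := by positivity
        linarith [hy.2]
  rw [Finset.sum_mul, Finset.sum_congr rfl habs,
    Finset.sum_range_sub' (fun j : ℕ => sin (y + π/(2*m) - (j:ℕ) * (π/m)) / 2)]
  have : sin (y + π/(2*m) - (m:ℕ) * (π/m)) = - sin (y + π/(2*m)) := by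
    rw [← Real.sin_sub_pi]; congr 1; field_simp
  rw [this]
  simp
  linarith [Real.sin_le_one (y + π/(2*m))]

theorem s_pos {m : ℕ} (hm : 0 < m) : 0 < sin (π / (2*m)) := by
  have h1m : (1:ℝ) ≤ m := by exact_mod_cast hm
  apply Real.sin_pos_of_pos_of_lt_pi
  · positivity
  · rw [div_lt_iff₀ (by positivity)]; nlinarith [Real.pi_pos]

theorem ms_gt {m : ℕ} (hm : 3 ≤ m) : 1 < m * sin (π / (2*m)) := by
  have h1m : (3:ℝ) ≤ m := by exact_mod_cast hm
  have := Real.mul_lt_sin (x := π / (2*m)) (by positivity) (by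
    apply div_lt_div_of_pos_left Real.pi_pos (by norm_num) (by linarith))
  have h2 : 2 / π * (π / (2*m)) = 1 / m := by field_simp
  rw [h2, div_lt_iff₀ (by positivity)] at this
  linarith

/-- signed directions summing to zero -/
theorem ex_zero {m q p : ℕ} (hm : m = p * q) (hp : Odd p) (hp1 : 1 < p) (hq : 0 < q) :
    ∑ j ∈ Finset.range m, Complex.exp (((j * (π / m) + ((j / q : ℕ) : ℝ) * π : ℝ) : ℂ) * Complex.I) = 0 := by
  subst hm
  set ω : ℂ := Complex.exp (((π / p + π : ℝ) : ℂ) * Complex.I) with hω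
  have hp' : (0:ℝ) < p := by exact_mod_cast (by omega : 0 < p)
  have hq' : (0:ℝ) < q := by exact_mod_cast hq
  have hω1 : ω ^ p = 1 := by
    rw [hω, ← Complex.exp_nat_mul, Complex.exp_eq_one_iff]
    obtain ⟨k, hk⟩ := hp
    refine ⟨k + 1, ?_⟩
    have : (p:ℂ) ≠ 0 := by exact_mod_cast (by omega : p ≠ 0)
    push_cast
    field_simp
    rw [hk]; push_cast; ring
  have hω2 : ω ≠ 1 := by
    intro h
    have h2 := congrArg Complex.im h
    rw [hω, Complex.exp_ofReal_mul_I_im, Real.sin_add_pi] at h2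
    have : 0 < sin (π / p) := by
      apply Real.sin_pos_of_pos_of_lt_pi
      · positivity
      · apply div_lt_self Real.pi_pos; exact_mod_cast hp1
    simp at h2
    linarith
  have hgeom : ∑ t ∈ Finset.range p, ω ^ t = 0 := by
    rw [geom_sum_eq hω2, hω1]; simp
  have hterm : ∀ t r : ℕ, r < q → Complex.exp ((((r + q * t : ℕ) * (π / (p * q : ℕ)) + (((r + q * t) / q : ℕ) : ℝ) * π : ℝ) : ℂ) * Complex.I)
      = Complex.exp (((r * (π / (p * q : ℕ)) : ℝ) : ℂ) * Complex.I) * ω ^ t := by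
    intro t r hr
    rw [hω, ← Complex.exp_nat_mul, ← Complex.exp_add]
    congr 1
    rw [Nat.add_mul_div_left _ _ hq, Nat.div_eq_of_lt hr]
    have : (p:ℂ) ≠ 0 := by exact_mod_cast (by omega : p ≠ 0)
    have : (q:ℂ) ≠ 0 := by exact_mod_cast (by omega : q ≠ 0)
    push_cast
    field_simp
    ring
  rw [Finset.sum_range, ← Equiv.sum_comp finProdFinEquiv, Fintype.sum_prod_type, Finset.sum_comm]
  apply Finset.sum_eq_zero
  intro r _
  simp only [finProdFinEquiv_apply_val]
  rw [Finset.sum_congr rfl (fun (t : Fin p) _ => hterm t r r.2), ← Finset.mul_sum, ← Finset.sum_range (fun t => ω ^ t), hgeom, mul_zero]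

theorem inner_E2 (a x : E2) : ⟪a, x⟫ = a 0 * x 0 + a 1 * x 1 := by
  rw [PiLp.inner_apply, Fin.sum_univ_two]
  simp [mul_comm]

theorem normsq_E2 (x : E2) : ‖x‖ ^ 2 = x 0 ^ 2 + x 1 ^ 2 := by
  rw [EuclideanSpace.real_norm_sq_eq, Fin.sum_univ_two]

theorem polar_E2 (v : E2) : ∃ R t : ℝ, 0 ≤ R ∧ v 0 = R * cos t ∧ v 1 = R * sin t ∧ ‖v‖ = R := by
  refine ⟨‖(⟨v 0, v 1⟩ : ℂ)‖, Complex.arg ⟨v 0, v 1⟩, norm_nonneg _, ?_, ?_, ?_⟩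
  · rw [Complex.norm_mul_cos_arg]
  · rw [Complex.norm_mul_sin_arg]
  · rw [← sq_eq_sq₀ (norm_nonneg _) (norm_nonneg _), normsq_E2, Complex.sq_norm, Complex.normSq_apply]
    ring

theorem Phi_sq {m : ℕ} (a : Fin m → E2) (x y : E2) :
    ‖PhiMap a x - PhiMap a y‖ ^ 2 = ∑ j, (|⟪a j, x⟫| - |⟪a j, y⟫|) ^ 2 := by
  rw [EuclideanSpace.real_norm_sq_eq]
  rfl

theorem sq_abs_min (p q : ℝ) : (|p| - |q|)^2 = min ((p+q)^2) ((p-q)^2) := by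
  have h : |p| * |q| = |p * q| := (abs_mul p q).symm
  have e : (|p| - |q|)^2 = p^2 + q^2 - 2 * |p*q| := by
    rw [← h, ← sq_abs p, ← sq_abs q]; ring
  rw [e]
  rcases abs_cases (p*q) with ⟨h1, h2⟩ | ⟨h1, h2⟩
  · rw [h1, min_eq_right (by nlinarith)]; ring
  · rw [h1, min_eq_left (by nlinarith)]; ring

theorem pdist_nonneg (x y : E2) : 0 ≤ pdist x y := le_min (norm_nonneg _) (norm_nonneg _)

theorem Phi_le {m : ℕ} (a : Fin m → E2) (K : ℝ)
    (h : ∀ v : E2, ∑ j, ⟪a j, v⟫ ^ 2 ≤ K * ‖v‖^2) (x y : E2) :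
    ‖PhiMap a x - PhiMap a y‖ ^ 2 ≤ K * pdist x y ^ 2 := by
  rw [Phi_sq]
  simp only [sq_abs_min, ← inner_add_right, ← inner_sub_right]
  unfold pdist
  rcases min_cases ‖x - y‖ ‖x + y‖ with ⟨e, _⟩ | ⟨e, _⟩ <;> rw [e]
  · exact (Finset.sum_le_sum fun j _ => min_le_right _ _).trans (h _)
  · exact (Finset.sum_le_sum fun j _ => min_le_left _ _).trans (h _)

theorem ratio_le {m : ℕ} (a : Fin m → E2) (K : ℝ)
    (h : ∀ v : E2, ∑ j, ⟪a j, v⟫ ^ 2 ≤ K * ‖v‖^2) : ∀ r ∈ ratioSet a, r ≤ √K := by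
  rintro r ⟨x, y, hxy, rfl⟩
  have hp : 0 < pdist x y := lt_of_le_of_ne (pdist_nonneg x y) hxy.symm
  apply Real.le_sqrt_of_sq_le
  rw [div_pow, div_le_iff₀ (by positivity)]
  exact Phi_le a K h x y

theorem ratio_bdd {m : ℕ} (a : Fin m → E2) : BddAbove (ratioSet a) := by
  refine ⟨_, ratio_le a (∑ j, ‖a j‖^2) fun v => ?_⟩
  rw [Finset.sum_mul]
  apply Finset.sum_le_sum
  intro j _
  rw [← mul_pow, ← sq_abs]
  exact pow_le_pow_left₀ (abs_nonneg _) (abs_real_inner_le_norm _ _) 2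

theorem ratio_nonneg {m : ℕ} (a : Fin m → E2) : ∀ r ∈ ratioSet a, 0 ≤ r := by
  rintro r ⟨x, y, hxy, rfl⟩
  exact div_nonneg (norm_nonneg _) (pdist_nonneg _ _)

theorem vec2_0 (x y : ℝ) : vec2 x y 0 = x := rfl
theorem vec2_1 (x y : ℝ) : vec2 x y 1 = y := rfl

theorem ratio_mem_unit {m : ℕ} (a : Fin m → E2) (v : E2) (hv : ‖v‖ = 1) :
    √(∑ j, ⟪a j, v⟫ ^ 2) ∈ ratioSet a := by
  refine ⟨v, 0, ?_, ?_⟩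
  · simp [pdist, hv]
  · have : pdist v 0 = 1 := by simp [pdist, hv]
    rw [this, div_one, ← Real.sqrt_sq (norm_nonneg (PhiMap a v - PhiMap a 0)), Phi_sq]
    simp

theorem ratio_nonempty {m : ℕ} (a : Fin m → E2) : (ratioSet a).Nonempty := by
  have : ‖vec2 1 0‖ = 1 := by
    rw [← sq_eq_sq₀ (norm_nonneg _) (by norm_num), normsq_E2, vec2_0, vec2_1]; norm_num
  exact ⟨_, ratio_mem_unit a _ this⟩

theorem lipL_nonneg {m : ℕ} (a : Fin m → E2) : 0 ≤ lipL a := Real.sInf_nonneg (ratio_nonneg a)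

theorem lipU_nonneg {m : ℕ} (a : Fin m → E2) : 0 ≤ lipU a := Real.sSup_nonneg (ratio_nonneg a)

theorem le_lipU {m : ℕ} (a : Fin m → E2) (v : E2) : ∑ j, ⟪a j, v⟫ ^ 2 ≤ lipU a ^ 2 * ‖v‖^2 := by
  by_cases hv : v = 0
  · simp [hv]
  have hn : 0 < ‖v‖ := norm_pos_iff.2 hv
  have hu : ‖(‖v‖⁻¹ • v)‖ = 1 := by
    rw [norm_smul, norm_inv, norm_norm]; field_simp
  have h := le_csSup (ratio_bdd a) (ratio_mem_unit a _ hu)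
  have h2 := (Real.sqrt_le_left (lipU_nonneg a)).1 h
  simp only [inner_smul_right, mul_pow] at h2
  rw [← Finset.mul_sum, inv_pow, inv_mul_le_iff₀ (by positivity)] at h2
  linarith

theorem lipL_le {m : ℕ} (a : Fin m → E2) (ρ τ : Fin m → ℝ)
    (h0 : ∀ j, a j 0 = ρ j * cos (τ j)) (h1 : ∀ j, a j 1 = ρ j * sin (τ j)) (φ : ℝ) :
    2 * lipL a ^ 2 ≤ ∑ j, ρ j ^ 2 - ∑ j, ρ j ^ 2 * |cos (φ - 2 * τ j)| := by
  set u : E2 := vec2 (cos (φ/2)) (sin (φ/2)) with hu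
  set v : E2 := vec2 (-sin (φ/2)) (cos (φ/2)) with hv
  set x : E2 := (1/2:ℝ) • (u + v) with hx
  set y : E2 := (1/2:ℝ) • (u - v) with hy
  have hxy1 : x + y = u := by rw [hx, hy, ← smul_add]; rw [show u + v + (u - v) = (2:ℝ) • u by rw [two_smul]; abel, smul_smul]; norm_num
  have hxy2 : x - y = v := by rw [hx, hy, ← smul_sub]; rw [show u + v - (u - v) = (2:ℝ) • v by rw [two_smul]; abel, smul_smul]; norm_num
  have hun : ‖u‖ = 1 := by
    rw [← sq_eq_sq₀ (norm_nonneg _) (by norm_num), normsq_E2, hu, vec2_0, vec2_1]; simp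
  have hvn : ‖v‖ = 1 := by
    rw [← sq_eq_sq₀ (norm_nonneg _) (by norm_num), normsq_E2, hv, vec2_0, vec2_1]; simp
  have hpd : pdist x y = 1 := by simp [pdist, hxy1, hxy2, hun, hvn]
  have hmem : ‖PhiMap a x - PhiMap a y‖ ∈ ratioSet a := ⟨x, y, by simp [hpd], by simp [hpd]⟩
  have hle : lipL a ≤ ‖PhiMap a x - PhiMap a y‖ := csInf_le ⟨0, ratio_nonneg a⟩ hmem
  have hle2 := pow_le_pow_left₀ (lipL_nonneg a) hle 2
  rw [Phi_sq] at hle2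
  simp only [sq_abs_min, ← inner_add_right, ← inner_sub_right, hxy1, hxy2] at hle2
  refine le_trans (mul_le_mul_of_nonneg_left hle2 (by norm_num)) (le_of_eq ?_)
  rw [Finset.mul_sum, ← Finset.sum_sub_distrib]
  apply Finset.sum_congr rfl
  intro j _
  have e1 : ⟪a j, u⟫ = ρ j * cos (φ/2 - τ j) := by
    rw [inner_E2, h0, h1, hu, vec2_0, vec2_1, Real.cos_sub]; ring
  have e2 : ⟪a j, v⟫ = - (ρ j * sin (φ/2 - τ j)) := by
    rw [inner_E2, h0, h1, hv, vec2_0, vec2_1, Real.sin_sub]; ring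
  have e3 : φ - 2 * τ j = 2 * (φ/2 - τ j) := by ring
  rw [e1, e2, e3, Real.cos_two_mul]
  have hs := Real.sin_sq_add_cos_sq (φ/2 - τ j)
  have hρ := sq_nonneg (ρ j)
  set c := cos (φ/2 - τ j)
  set s := sin (φ/2 - τ j)
  have es : s^2 = 1 - c^2 := by linarith
  rw [neg_sq, mul_pow, mul_pow, es]
  rcases abs_cases (2*c^2-1) with ⟨ha, hb⟩ | ⟨ha, hb⟩
  · rw [ha, min_eq_right (mul_le_mul_of_nonneg_left (by linarith) hρ)]; ring
  · rw [ha, min_eq_left (mul_le_mul_of_nonneg_left (by linarith) hρ)]; ring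

theorem harmonic_signed_frame {m : ℕ} (hm : 3 ≤ m) (hodd : ∃ k, Odd k ∧ 1 < k ∧ k ∣ m) :
    ∃ M : Fin m → E2, condNum M ≤ ENNReal.ofReal (√(1 / (1 - 1 / (m * sin (π / (2*m)))))) := by
  obtain ⟨p, hp, hp1, q, hpq⟩ := hodd
  have hm0 : 0 < m := by omega
  have hm' : (0:ℝ) < m := by exact_mod_cast hm0
  have hq : 0 < q := by
    rcases Nat.eq_zero_or_pos q with rfl | h
    · omega
    · exact h
  have hs := s_pos hm0
  have hms := ms_gt hm
  set s := sin (π / (2*m)) with hsdef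
  set κ := 1 - 1 / (m * s) with hκ
  have hκ0 : 0 < κ := by
    rw [hκ, sub_pos, div_lt_one (by linarith)]; exact hms
  set α : Fin m → ℝ := fun j => (j:ℕ) * (π / m) + (((j:ℕ) / q : ℕ) : ℝ) * π with hα
  have hz := ex_zero hpq hp hp1 hq
  rw [Finset.sum_range] at hz
  have hC : ∑ j, cos (α j) = 0 := by
    have := congrArg Complex.re hz
    rw [Complex.re_sum] at this
    simpa only [Complex.exp_ofReal_mul_I_re, Complex.zero_re] using this
  have hS : ∑ j, sin (α j) = 0 := by
    have := congrArg Complex.im hz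
    rw [Complex.im_sum] at this
    simpa only [Complex.exp_ofReal_mul_I_im, Complex.zero_im] using this
  have hCφ : ∀ φ, ∑ j, cos (φ - α j) = 0 := by
    intro φ
    simp only [Real.cos_sub]
    rw [Finset.sum_add_distrib, ← Finset.mul_sum, ← Finset.mul_sum, hC, hS]; ring
  have hf : ∀ φ, ∑ j, |cos (φ - α j)| ≤ 1 / s := by
    intro φ
    rw [le_div_iff₀ hs]
    refine le_trans (le_of_eq ?_) (harm_sum hm0 φ)
    rw [Finset.sum_range]
    congr 1
    apply Finset.sum_congr rfl
    intro j _
    rw [← abs_cos_shift (φ - (j:ℕ) * (π/m)) (((j:ℕ)/q : ℕ) : ℤ)]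
    congr 2
    simp only [hα]; rw [Int.cast_natCast]; ring
  set M : Fin m → E2 := fun j => vec2 (cos (α j / 2)) (sin (α j / 2)) with hM
  have hin : ∀ (v : E2) (R t : ℝ), v 0 = R * cos t → v 1 = R * sin t → ∀ j,
      ⟪M j, v⟫ ^ 2 = R^2 * ((1 + cos (2 * t - α j)) / 2) := by
    intro v R t h0 h1 j
    have : ⟪M j, v⟫ = R * cos (t - α j / 2) := by
      rw [inner_E2, h0, h1, Real.cos_sub]
      simp only [hM, vec2_0, vec2_1]; ring
    rw [this, mul_pow, Real.cos_sq]
    rw [show 2 * (t - α j / 2) = 2 * t - α j by ring]; ring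
  have hU : ∀ v : E2, ∑ j, ⟪M j, v⟫ ^ 2 ≤ (m / 2 : ℝ) * ‖v‖^2 := by
    intro v
    obtain ⟨R, t, hR, h0, h1, hn⟩ := polar_E2 v
    simp only [hin v R t h0 h1]
    rw [← Finset.mul_sum, ← Finset.sum_div, Finset.sum_add_distrib, hCφ, hn]
    simp; linarith
  have hU2 : lipU M ≤ √(m/2) := csSup_le (ratio_nonempty M) (ratio_le M _ hU)
  have hL : ∀ x y : E2, (m/2 * κ) * pdist x y ^ 2 ≤ ‖PhiMap M x - PhiMap M y‖ ^ 2 := by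
    intro x y
    rw [Phi_sq]
    simp only [sq_abs_min, ← inner_add_right, ← inner_sub_right]
    obtain ⟨R, t, hR, h0, h1, hn⟩ := polar_E2 (x + y)
    obtain ⟨R', t', hR', h0', h1', hn'⟩ := polar_E2 (x - y)
    simp only [hin _ R t h0 h1, hin _ R' t' h0' h1']
    set d := pdist x y with hd
    have hd0 : 0 ≤ d := pdist_nonneg _ _
    have hdR : d^2 ≤ R^2 := pow_le_pow_left₀ hd0 (hn ▸ min_le_right _ _) 2
    have hdR' : d^2 ≤ R'^2 := pow_le_pow_left₀ hd0 (hn' ▸ min_le_left _ _) 2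
    have hterm : ∀ j, d^2 * ((1 + (cos (2*t - α j) + cos (2*t' - α j))/2 - |cos ((t + t' - π/2) - α j)|)/2) ≤
        min (R^2 * ((1 + cos (2 * t - α j)) / 2)) (R'^2 * ((1 + cos (2 * t' - α j)) / 2)) := by
      intro j
      have e : cos (2*t - α j) - cos (2*t' - α j) = -2 * cos ((t + t' - π/2) - α j) * sin (t - t') := by
        rw [Real.cos_sub_cos, show (2*t - α j + (2*t' - α j))/2 = t + t' - α j by ring,
          show (2*t - α j - (2*t' - α j))/2 = t - t' by ring,
          show t + t' - π/2 - α j = (t + t' - α j) - π/2 by ring, Real.cos_sub_pi_div_two]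
      have e2 : |cos (2*t - α j) - cos (2*t' - α j)| ≤ 2 * |cos ((t + t' - π/2) - α j)| := by
        rw [e, abs_mul, abs_mul]
        have := Real.abs_sin_le_one (t - t')
        have := abs_nonneg (cos ((t + t' - π/2) - α j))
        rw [show |(-2:ℝ)| = 2 by norm_num]
        nlinarith
      have e3 := abs_le.1 e2
      have b1 := Real.neg_one_le_cos (2*t - α j)
      have b2 := Real.neg_one_le_cos (2*t' - α j)
      apply le_min
      · refine le_trans ?_ (mul_le_mul_of_nonneg_right hdR (by linarith))
        exact mul_le_mul_of_nonneg_left (by linarith) (sq_nonneg d)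
      · refine le_trans ?_ (mul_le_mul_of_nonneg_right hdR' (by linarith))
        exact mul_le_mul_of_nonneg_left (by linarith) (sq_nonneg d)
    refine le_trans ?_ (Finset.sum_le_sum fun j _ => hterm j)
    rw [← Finset.mul_sum, ← Finset.sum_div, Finset.sum_sub_distrib, Finset.sum_add_distrib, ← Finset.sum_div,
      Finset.sum_add_distrib, hCφ, hCφ, mul_comm]
    apply mul_le_mul_of_nonneg_left _ (sq_nonneg d)
    have := hf (t + t' - π/2)
    have e : m * κ = m - 1 / s := by rw [hκ]; field_simp
    simp only [Finset.sum_const, Finset.card_univ, Fintype.card_fin, nsmul_eq_mul]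
    linarith
  have hL2 : √(m/2 * κ) ≤ lipL M := by
    apply le_csInf (ratio_nonempty M)
    rintro r ⟨x, y, hxy, rfl⟩
    have hp : 0 < pdist x y := lt_of_le_of_ne (pdist_nonneg x y) hxy.symm
    rw [Real.sqrt_le_left (div_nonneg (norm_nonneg _) hp.le), div_pow, le_div_iff₀ (by positivity)]
    exact hL x y
  have hpos : 0 < √(m/2 * κ) := Real.sqrt_pos.2 (by positivity)
  refine ⟨M, ?_⟩
  unfold condNum
  rw [if_neg (by linarith)]
  apply ENNReal.ofReal_le_ofReal
  calc lipU M / lipL M ≤ √(m/2) / √(m/2 * κ) := div_le_div₀ (Real.sqrt_nonneg _) hU2 hpos hL2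
    _ = _ := by
      rw [← Real.sqrt_div (by positivity)]; congr 1; field_simp

/-- If `m ≥ 3` has an odd factor and `A = [a_1,…,a_m]ᵀ ∈ ℝ^{m×2}` attains
the minimal condition number, then its rows form a tight frame
`∑ a_j a_jᵀ = ((1/2)·∑ ‖a_j‖²)·I₂` and all rows have equal norm. -/
theorem stmt15 {m : ℕ} (hm : 3 ≤ m) (hodd : ∃ k, Odd k ∧ 1 < k ∧ k ∣ m)
    (a : Fin m → E2) (hopt : condNum a = ⨅ M : Fin m → E2, condNum M) :
    (∑ j, Matrix.vecMulVec (toFun2 (a j)) (toFun2 (a j)) =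
        ((1 / 2) * ∑ j, ‖a j‖ ^ 2) • (1 : Matrix (Fin 2) (Fin 2) ℝ)) ∧
    ∀ i j : Fin m, ‖a i‖ = ‖a j‖ := by
  obtain ⟨M, hMle⟩ := harmonic_signed_frame hm hodd
  have hm0 : 0 < m := by omega
  have hm' : (0:ℝ) < m := by exact_mod_cast hm0
  have hs := s_pos hm0
  have hms := ms_gt hm
  have hca := (hopt.trans_le (iInf_le _ M)).trans hMle
  choose ρ τ hρ h0 h1 hn using fun j => polar_E2 (a j)
  have hcore := core_fin hm0 (fun j => ρ j ^ 2) (fun j => 2 * τ j) (fun _ => sq_nonneg _)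
  set s := sin (π / (2*m)) with hsdef
  set κ := 1 - 1 / (m * s) with hκ
  have hκ0 : 0 < κ := by
    rw [hκ, sub_pos, div_lt_one (by linarith)]; exact hms
  set L := lipL a with hLdef
  set U := lipU a with hUdef
  have hU0 : 0 ≤ U := lipU_nonneg a
  have hL0 : L ≠ 0 := by
    intro h
    unfold condNum at hca
    rw [if_pos h] at hca
    exact absurd (top_le_iff.1 hca) ENNReal.ofReal_ne_top
  have hLp : 0 < L := lt_of_le_of_ne (lipL_nonneg a) hL0.symm
  have hUL : κ * U^2 ≤ L^2 := by
    unfold condNum at hca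
    rw [if_neg hL0, ENNReal.ofReal_le_ofReal_iff (Real.sqrt_nonneg _)] at hca
    rw [Real.le_sqrt (div_nonneg hU0 hLp.le) (by positivity), div_pow, div_le_div_iff₀ (by positivity) hκ0] at hca
    linarith
  set T := ∑ j, ρ j ^ 2 with hT
  have hTn : ∑ j, ‖a j‖ ^ 2 = T := by simp only [hn, hT]
  have hTpq : ∑ j, (a j 0)^2 + ∑ j, (a j 1)^2 = T := by
    rw [← hTn, ← Finset.sum_add_distrib]
    exact Finset.sum_congr rfl fun j _ => (normsq_E2 _).symm
  have hUv : ∀ x y : ℝ, ∑ j, (a j 0 * x + a j 1 * y)^2 ≤ U^2 * (x^2 + y^2) := by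
    intro x y
    have := le_lipU a (vec2 x y)
    simpa only [inner_E2, normsq_E2, vec2_0, vec2_1] using this
  have hexp : ∀ x y : ℝ, ∑ j, (a j 0 * x + a j 1 * y)^2 =
      (∑ j, (a j 0)^2) * x^2 + 2 * (∑ j, a j 0 * a j 1) * (x * y) + (∑ j, (a j 1)^2) * y^2 := by
    intro x y
    rw [Finset.mul_sum, Finset.sum_mul, Finset.sum_mul, Finset.sum_mul, ← Finset.sum_add_distrib, ← Finset.sum_add_distrib]
    exact Finset.sum_congr rfl fun j _ => by ring
  simp only [hexp] at hUv
  have u1 := hUv 1 0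
  have u2 := hUv 0 1
  have u3 := hUv 1 1
  have u4 := hUv 1 (-1)
  have hTU : T ≤ 2 * U^2 := by linarith
  have hD : ∀ φ, ∑ j, ρ j ^ 2 * |cos (φ - 2 * τ j)| ≤ T - 2 * κ * U^2 := by
    intro φ
    have := lipL_le a ρ τ h0 h1 φ
    linarith
  obtain ⟨c1, c2⟩ := hcore _ hD
  have hTpos : 0 < T := by
    have hL2 := lipL_le a ρ τ h0 h1 0
    have : 0 ≤ ∑ j, ρ j ^ 2 * |cos (0 - 2 * τ j)| :=
      Finset.sum_nonneg fun j _ => mul_nonneg (sq_nonneg _) (abs_nonneg _)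
    have : 0 < L^2 := by positivity
    linarith
  have hκms : κ * (m * s) = m * s - 1 := by rw [hκ]; field_simp
  have hkk : 0 < κ * (m * s) := by positivity
  have hUT : 2 * U^2 = T := by
    apply le_antisymm _ hTU
    have : T ≤ T * (m * s) - (2 * U^2) * (κ * (m*s)) := by
      calc T ≤ _ := c1
        _ = _ := by ring
    by_contra hcon
    push Not at hcon
    have := mul_lt_mul_of_pos_right hcon hkk
    rw [hκms] at *
    linarith
  have hDe : T - 2 * κ * U^2 = T / (m * s) := by
    rw [show 2 * κ * U^2 = κ * (2 * U^2) by ring, hUT, hκ]; field_simp; ring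
  rw [hDe] at c2
  have hall := c2 (by positivity) (by field_simp)
  constructor
  · have t0 : ∑ j, (a j 0)^2 = T / 2 := by linarith
    have t1 : ∑ j, (a j 1)^2 = T / 2 := by linarith
    have t2 : ∑ j, a j 0 * a j 1 = 0 := by linarith
    have t3 : ∑ j, a j 1 * a j 0 = 0 := by rw [← t2]; exact Finset.sum_congr rfl fun j _ => mul_comm _ _
    rw [hTn]
    have hv : ∀ j i, toFun2 (a j) i = a j i := fun _ _ => rfl
    ext i k
    rw [Matrix.sum_apply]
    simp only [Matrix.vecMulVec_apply, hv, Matrix.smul_apply, smul_eq_mul]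
    fin_cases i <;> fin_cases k <;> simp
    · simp only [← sq]; rw [t0]; ring
    · exact t2
    · exact t3
    · simp only [← sq]; rw [t1]; ring
  · intro i j
    have := (hall i).trans (hall j).symm
    rw [hn, hn]
    exact (sq_eq_sq₀ (hρ i) (hρ j)).1 this
end
end
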